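/- Let M ⊆ ℝ^n × ℝ^n × ℝ^m × ℝ^m (elements written (f_x, e_x, y, u), with flows (f_x, y) and efforts (e_x, u)) be a monotone relation, and let H(x) = ½ xᵀQx + aᵀx + c with Q = Qᵀ positive semidefinite. Let (x_i, u_i, y_i), i = 1,2, be two trajectories on an interval I, with x_i differentiable and (−ẋ_i(t), ∇H(x_i(t)), y_i(t), u_i(t)) ∈ M for all t ∈ I. Then d/dt [ ½ (x₁(t) − x₂(t))ᵀ Q (x₁(t) − x₂(t)) ] ≤ ⟨u₁(t) − u₂(t), y₁(t) − y₂(t)⟩ for all t ∈ I; that is, an incrementally port-Hamiltonian system with quadratic-affine Hamiltonian is incrementally passive with incremental storage function V(x₁,x₂) = ½ (x₁ − x₂)ᵀQ(x₁ − x₂). -/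

import Mathlib

/-- The duality pairing (standard inner product) on `ℝ^n`. -/
noncomputable def dot {n : ℕ} (e f : Fin n → ℝ) : ℝ := ∑ i, e i * f i

/-- Monotone relation with elements `(f_x, e_x, y, u)`, flows `(f_x, y)` and
efforts `(e_x, u)`. -/
def MonoPH {n m : ℕ}
    (M : Set ((Fin n → ℝ) × (Fin n → ℝ) × (Fin m → ℝ) × (Fin m → ℝ))) : Prop :=
  ∀ fx ex y u fx' ex' y' u',
    (fx, ex, y, u) ∈ M → (fx', ex', y', u') ∈ M →
    0 ≤ dot (ex - ex') (fx - fx') + dot (u - u') (y - y')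

/-!
The increment `z = x₁ - x₂` satisfies `∇H(x₁) - ∇H(x₂) = Q z`, and for symmetric `Q` this is also
the gradient of `½ zᵀQz` at `z`. Hence the storage function has derivative `⟨Q z, ż⟩` along the two
trajectories, and monotonicity of `M`, whose flow component is `-ẋ`, bounds this by the supplied
power `⟨u₁ - u₂, y₁ - y₂⟩`.
-/

open Matrix

theorem dot_eq_dotProduct {n : ℕ} (e f : Fin n → ℝ) : dot e f = e ⬝ᵥ f := rfl

section Calculus

variable {𝕜 𝔸 ι κ : Type*} [NontriviallyNormedField 𝕜] [NormedRing 𝔸] [NormedAlgebra 𝕜 𝔸]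
  [Fintype ι] {t : 𝕜}

theorem hasDerivAt_dotProduct {v w : 𝕜 → ι → 𝔸} {v' w' : ι → 𝔸}
    (hv : HasDerivAt v v' t) (hw : HasDerivAt w w' t) :
    HasDerivAt (fun τ => v τ ⬝ᵥ w τ) (v' ⬝ᵥ w t + v t ⬝ᵥ w') t := by
  have hsum : HasDerivAt (fun τ => ∑ i, v τ i * w τ i) (∑ i, (v' i * w t i + v t i * w' i)) t :=
    HasDerivAt.fun_sum fun i _ => (hasDerivAt_pi.1 hv i).mul (hasDerivAt_pi.1 hw i)
  exact hsum.congr_deriv Finset.sum_add_distrib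

theorem hasDerivAt_mulVec [Finite κ] (A : Matrix κ ι 𝔸) {v : 𝕜 → ι → 𝔸} {v' : ι → 𝔸}
    (hv : HasDerivAt v v' t) : HasDerivAt (fun τ => A *ᵥ v τ) (A *ᵥ v') t := by
  have := Fintype.ofFinite κ
  exact hasDerivAt_pi.2 fun k =>
    HasDerivAt.fun_sum fun j _ => (hasDerivAt_pi.1 hv j).const_mul (A k j)

end Calculus

theorem dotProduct_mulVec_eq_mulVec_dotProduct_of_isSymm {ι R : Type*} [Fintype ι]
    [NonUnitalCommSemiring R] {Q : Matrix ι ι R} (hQ : Q.IsSymm) (v w : ι → R) :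
    v ⬝ᵥ Q *ᵥ w = Q *ᵥ v ⬝ᵥ w := by
  rw [dotProduct_mulVec, ← mulVec_transpose, hQ.eq]

theorem hasDerivAt_half_dotProduct_mulVec_self {𝕜 ι : Type*} [NontriviallyNormedField 𝕜]
    [NeZero (2 : 𝕜)] [Fintype ι] {Q : Matrix ι ι 𝕜} (hQ : Q.IsSymm)
    {z : 𝕜 → ι → 𝕜} {z' : ι → 𝕜} {t : 𝕜} (hz : HasDerivAt z z' t) :
    HasDerivAt (fun τ => 1 / 2 * (z τ ⬝ᵥ Q *ᵥ z τ)) (Q *ᵥ z t ⬝ᵥ z') t := by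
  have hderiv := (hasDerivAt_dotProduct hz (hasDerivAt_mulVec Q hz)).const_mul (1 / 2)
  refine hderiv.congr_deriv ?_
  calc 1 / 2 * (z' ⬝ᵥ Q *ᵥ z t + z t ⬝ᵥ Q *ᵥ z')
      = 1 / 2 * (Q *ᵥ z t ⬝ᵥ z' + Q *ᵥ z t ⬝ᵥ z') := by
        rw [dotProduct_comm z', dotProduct_mulVec_eq_mulVec_dotProduct_of_isSymm hQ (z t)]
    _ = Q *ᵥ z t ⬝ᵥ z' := by
        rw [← two_mul, one_div, inv_mul_cancel_left₀ two_ne_zero]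

theorem MonoPH.dot_sub_le_dot_sub {n m : ℕ}
    {M : Set ((Fin n → ℝ) × (Fin n → ℝ) × (Fin m → ℝ) × (Fin m → ℝ))} (hM : MonoPH M)
    {v₁ v₂ e₁ e₂ : Fin n → ℝ} {y₁ y₂ u₁ u₂ : Fin m → ℝ}
    (h₁ : (-v₁, e₁, y₁, u₁) ∈ M) (h₂ : (-v₂, e₂, y₂, u₂) ∈ M) :
    dot (e₁ - e₂) (v₁ - v₂) ≤ dot (u₁ - u₂) (y₁ - y₂) := by
  have hmono : 0 ≤ dot (e₁ - e₂) (-v₁ - -v₂) + dot (u₁ - u₂) (y₁ - y₂) :=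
    hM _ _ _ _ _ _ _ _ h₁ h₂
  have hneg : dot (e₁ - e₂) (-v₁ - -v₂) = -dot (e₁ - e₂) (v₁ - v₂) := by
    rw [← neg_sub', dot_eq_dotProduct, dot_eq_dotProduct, dotProduct_neg]
  linarith

theorem incrementallyPH_quadratic_incrementallyPassive_general {n m : ℕ}
    {M : Set ((Fin n → ℝ) × (Fin n → ℝ) × (Fin m → ℝ) × (Fin m → ℝ))} (hM : MonoPH M)
    {Q : Matrix (Fin n) (Fin n) ℝ} (hQ : Q.IsSymm) {a : Fin n → ℝ} {t : ℝ}
    {x₁ x₂ : ℝ → Fin n → ℝ} {x₁' x₂' : Fin n → ℝ} {u₁ u₂ y₁ y₂ : Fin m → ℝ}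
    (hx₁ : HasDerivAt x₁ x₁' t) (hx₂ : HasDerivAt x₂ x₂' t)
    (h₁ : (-x₁', Q *ᵥ x₁ t + a, y₁, u₁) ∈ M) (h₂ : (-x₂', Q *ᵥ x₂ t + a, y₂, u₂) ∈ M) :
    HasDerivAt (fun τ => 1 / 2 * dot (x₁ τ - x₂ τ) (Q *ᵥ (x₁ τ - x₂ τ)))
        (dot (Q *ᵥ (x₁ t - x₂ t)) (x₁' - x₂')) t ∧
      dot (Q *ᵥ (x₁ t - x₂ t)) (x₁' - x₂') ≤ dot (u₁ - u₂) (y₁ - y₂) := by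
  have hgrad : Q *ᵥ x₁ t + a - (Q *ᵥ x₂ t + a) = Q *ᵥ (x₁ t - x₂ t) := by
    rw [add_sub_add_right_eq_sub, mulVec_sub]
  constructor
  · simp only [dot_eq_dotProduct]
    exact hasDerivAt_half_dotProduct_mulVec_self hQ (hx₁.sub hx₂)
  · rw [← hgrad]
    exact hM.dot_sub_le_dot_sub h₁ h₂

/-- An incrementally port-Hamiltonian system with quadratic-affine
Hamiltonian `H(x) = ½ xᵀQx + aᵀx + c` (so `∇H(x) = Qx + a`), `Q ⪰ 0`, is
incrementally passive with incremental storage function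
`V(x₁,x₂) = ½ (x₁−x₂)ᵀQ(x₁−x₂)`: along any two trajectories,
`d/dt V(x₁(t),x₂(t)) ≤ ⟨u₁(t) − u₂(t), y₁(t) − y₂(t)⟩`. -/
theorem incrementallyPH_quadratic_incrementallyPassive {n m : ℕ}
    (M : Set ((Fin n → ℝ) × (Fin n → ℝ) × (Fin m → ℝ) × (Fin m → ℝ)))
    (hM : MonoPH M)
    (Q : Matrix (Fin n) (Fin n) ℝ) (hQsym : Q.transpose = Q) (hQ : Q.PosSemidef)
    (a : Fin n → ℝ) (c : ℝ)
    (I : Set ℝ)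
    (x1 x2 x1' x2' : ℝ → Fin n → ℝ) (u1 u2 y1 y2 : ℝ → Fin m → ℝ)
    (hx1 : ∀ t ∈ I, HasDerivAt x1 (x1' t) t)
    (hx2 : ∀ t ∈ I, HasDerivAt x2 (x2' t) t)
    (h1 : ∀ t ∈ I, (-(x1' t), Q.mulVec (x1 t) + a, y1 t, u1 t) ∈ M)
    (h2 : ∀ t ∈ I, (-(x2' t), Q.mulVec (x2 t) + a, y2 t, u2 t) ∈ M) :
    ∀ t ∈ I,
      HasDerivAt
        (fun τ => (1 / 2) * dot (x1 τ - x2 τ) (Q.mulVec (x1 τ - x2 τ)))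
        (dot (Q.mulVec (x1 t - x2 t)) (x1' t - x2' t)) t ∧
      dot (Q.mulVec (x1 t - x2 t)) (x1' t - x2' t) ≤
        dot (u1 t - u2 t) (y1 t - y2 t) := by
  exact fun t ht => incrementallyPH_quadratic_incrementallyPassive_general hM hQsym
    (hx1 t ht) (hx2 t ht) (h1 t ht) (h2 t ht)
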